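/- Let 2 ≤ n ≤ 6, f ∈ C¹(ℝ), and let u be a W^{3,1}_loc(ℝⁿ) stable solution of div(∇u/√(1+|∇u|²)) = −f(u) in ℝⁿ which is radially symmetric with respect to the origin. Then u is constant. In other words, in dimensions 2 ≤ n ≤ 6 there exist no nonconstant radial stable solutions of the mean curvature equation, without any growth assumption at infinity. -/

import Mathlib

open MeasureTheory Metric Real Filter Asymptotics Bornology
open scoped RealInnerProductSpace Topology

noncomputable section

/-- Euclidean space `ℝⁿ`. -/
abbrev Euc (n : ℕ) := EuclideanSpace ℝ (Fin n)

/-- `φ` is an admissible test function on `Ω`: smooth with compact support contained in `Ω`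
(i.e. `φ ∈ C_c^∞(Ω)`). -/
def IsTestFun {n : ℕ} (Ω : Set (Euc n)) (φ : Euc n → ℝ) : Prop :=
  ContDiff ℝ (⊤ : ℕ∞) φ ∧ HasCompactSupport φ ∧ tsupport φ ⊆ Ω

/-- `u` is a weak solution of the mean curvature equation
`div(∇u/√(1+|∇u|²)) = -f(u)` in `Ω`:  `u ∈ W^{1,1}_loc(Ω)`, `f(u) ∈ L¹_loc(Ω)` and
`∫_Ω ∇u·∇φ/√(1+|∇u|²) = ∫_Ω f(u) φ` for every `φ ∈ C_c^∞(Ω)`. -/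
def IsWeakSolution {n : ℕ} (Ω : Set (Euc n)) (f : ℝ → ℝ) (u : Euc n → ℝ) : Prop :=
  LocallyIntegrableOn u Ω ∧
  LocallyIntegrableOn (fun x => ‖gradient u x‖) Ω ∧
  LocallyIntegrableOn (fun x => f (u x)) Ω ∧
  ∀ φ : Euc n → ℝ, IsTestFun Ω φ →
    ∫ x in Ω, ⟪gradient u x, gradient φ x⟫ / Real.sqrt (1 + ‖gradient u x‖ ^ 2)
      = ∫ x in Ω, f (u x) * φ x

/-- `u` is a stable solution of `div(∇u/√(1+|∇u|²)) = -f(u)` in `Ω`: it is a weak solution,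
`f'(u) ∈ L¹_loc(Ω)` and the second variation of the energy at `u` is nonnegative:
`∫_Ω f'(u) ξ² ≤ ∫_Ω (|∇ξ|²/√(1+|∇u|²) - (∇u·∇ξ)²/(1+|∇u|²)^{3/2})` for all `ξ ∈ C_c^∞(Ω)`. -/
def IsStableSolution {n : ℕ} (Ω : Set (Euc n)) (f : ℝ → ℝ) (u : Euc n → ℝ) : Prop :=
  IsWeakSolution Ω f u ∧
  LocallyIntegrableOn (fun x => deriv f (u x)) Ω ∧
  ∀ ξ : Euc n → ℝ, IsTestFun Ω ξ →
    ∫ x in Ω, deriv f (u x) * ξ x ^ 2 ≤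
      ∫ x in Ω, (‖gradient ξ x‖ ^ 2 / Real.sqrt (1 + ‖gradient u x‖ ^ 2)
        - ⟪gradient u x, gradient ξ x⟫ ^ 2 / (1 + ‖gradient u x‖ ^ 2) ^ ((3:ℝ)/2))

/-- A vector field `g` belongs to the Morrey space `M^p(Ω)`: there is `K > 0` with
`∫_{B_ρ(x₀) ∩ Ω} |g| ≤ K ρ^{n(1-1/p)}` for all `x₀ ∈ Ω` and `0 < ρ ≤ diam Ω`. -/
def MemMorrey {n : ℕ} (Ω : Set (Euc n)) (p : ℝ) (g : Euc n → Euc n) : Prop :=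
  ∃ K > (0:ℝ), ∀ x₀ ∈ Ω, ∀ ρ : ℝ, 0 < ρ → ρ ≤ Metric.diam Ω →
    ∫ x in Metric.ball x₀ ρ ∩ Ω, ‖g x‖ ≤ K * ρ ^ ((n : ℝ) * (1 - 1 / p))

/-!
On the half-line the second variation at `u = h(|x|)` is a Sturm–Liouville form with leading
coefficient `σ = r^(n-1) (1 + h'²)^(-3/2)`. Differentiating the radial equation shows that
`p = h'` solves the Jacobi equation of that form up to the term `(n-1) r^(n-3) p / √(1 + p²)`
coming from the curvature of the spheres, so testing stability with `p η` leaves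
`(n-1) ∫ σ p² η² / r² ≤ ∫ σ p² η'²`.
For `η = r^(-α)`, suitably cut off on a logarithmic scale, the right-hand side is essentially
`α² ∫ σ p² η² / r²`, whence `p = 0` as soon as `α² < n - 1` and
`r^(-2α) σ p² / r²` is integrable. Since `p² (1 + p²)^(-3/2)` is bounded whatever the growth of `u`,
integrability at infinity only requires `α > (n - 2) / 2`, and at the origin `p = O(r)` allows any
`α < n / 2`. Such an `α` exists exactly when `n ≤ 6`.
-/

section TestFunctions

open scoped ContDiff Convolution

/-- `ζ` is a compactly supported function of class `C^k` on the line, with support in `U`. -/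
structure IsTestFunOn (k : WithTop ℕ∞) (U : Set ℝ) (ζ : ℝ → ℝ) : Prop where
  contDiff : ContDiff ℝ k ζ
  hasCompactSupport : HasCompactSupport ζ
  tsupport_subset : tsupport ζ ⊆ U

namespace IsTestFunOn

variable {k : WithTop ℕ∞} {U : Set ℝ} {F ζ : ℝ → ℝ}

protected lemma continuous (hζ : IsTestFunOn k U ζ) : Continuous ζ :=
  hζ.contDiff.continuous

protected lemma differentiable (hζ : IsTestFunOn 1 U ζ) : Differentiable ℝ ζ :=
  hζ.contDiff.differentiable one_ne_zero

lemma eq_zero_of_notMem (hζ : IsTestFunOn k U ζ) {r : ℝ} (hr : r ∉ U) : ζ r = 0 :=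
  image_eq_zero_of_notMem_tsupport fun h => hr (hζ.tsupport_subset h)

protected lemma mono {V : Set ℝ} {l : WithTop ℕ∞} (hζ : IsTestFunOn k U ζ) (hl : l ≤ k)
    (hUV : U ⊆ V) :
    IsTestFunOn l V ζ :=
  ⟨hζ.contDiff.of_le hl, hζ.hasCompactSupport, hζ.tsupport_subset.trans hUV⟩

protected lemma deriv (hζ : IsTestFunOn 1 U ζ) : IsTestFunOn 0 U (deriv ζ) where
  contDiff := contDiff_zero.2 (hζ.contDiff.continuous_deriv le_rfl)
  hasCompactSupport := hζ.hasCompactSupport.deriv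
  tsupport_subset :=
    (closure_minimal support_deriv_subset (isClosed_tsupport ζ)).trans hζ.tsupport_subset

protected lemma sq (hζ : IsTestFunOn k U ζ) : IsTestFunOn k U (fun r => ζ r ^ 2) where
  contDiff := hζ.contDiff.pow 2
  hasCompactSupport := hζ.hasCompactSupport.comp_left (zero_pow two_ne_zero)
  tsupport_subset := by
    simpa only [tsupport, Function.support_pow _ two_ne_zero] using hζ.tsupport_subset

lemma mul_left (hU : IsOpen U) (hF : ContDiffOn ℝ k F U) (hζ : IsTestFunOn k U ζ) :
    IsTestFunOn k U (fun r => F r * ζ r) where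
  contDiff := contDiff_iff_contDiffAt.2 fun r => by
    by_cases hr : r ∈ tsupport ζ
    · exact (hF.contDiffAt (hU.mem_nhds (hζ.tsupport_subset hr))).mul hζ.contDiff.contDiffAt
    · refine (contDiffAt_const (c := (0 : ℝ))).congr_of_eventuallyEq ?_
      filter_upwards [notMem_tsupport_iff_eventuallyEq.1 hr] with s hs
      rw [hs, Pi.zero_apply, mul_zero]
  hasCompactSupport := hζ.hasCompactSupport.mul_left
  tsupport_subset := tsupport_mul_subset_right.trans hζ.tsupport_subset

lemma integrable_mul (hU : IsOpen U) (hF : ContinuousOn F U) (hζ : IsTestFunOn k U ζ) :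
    Integrable (fun r => F r * ζ r) :=
  have hFζ : IsTestFunOn 0 U (fun r => F r * ζ r) :=
    (hζ.mono zero_le subset_rfl).mul_left hU (contDiffOn_zero.2 hF)
  hFζ.continuous.integrable_of_hasCompactSupport hFζ.hasCompactSupport

lemma integral_mul_deriv_eq_neg {A A' : ℝ → ℝ} (hU : IsOpen U) (hζ : IsTestFunOn 1 U ζ)
    (hA : ∀ r ∈ U, HasDerivAt A (A' r) r) (hA' : ContinuousOn A' U) :
    ∫ r, A r * deriv ζ r = -∫ r, A' r * ζ r :=
  have hAc : ContinuousOn A U := fun r hr => (hA r hr).continuousAt.continuousWithinAt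
  integral_mul_deriv_eq_deriv_mul_of_integrable
    (fun r hr => hA r (hζ.tsupport_subset hr)) (fun r _ => (hζ.differentiable r).hasDerivAt)
    (hζ.deriv.integrable_mul hU hAc) (hζ.integrable_mul hU hA') (hζ.integrable_mul hU hAc)

end IsTestFunOn

lemma eqOn_neg_of_integral_mul_deriv_eq {U : Set ℝ} {A A' F : ℝ → ℝ} (hU : IsOpen U)
    (hA : ∀ r ∈ U, HasDerivAt A (A' r) r) (hA' : ContinuousOn A' U) (hF : ContinuousOn F U)
    (h : ∀ ζ, IsTestFunOn ∞ U ζ → ∫ r, A r * deriv ζ r = ∫ r, F r * ζ r) :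
    Set.EqOn A' (fun r => -F r) U := by
  have hae : ∀ᵐ r, r ∈ U → A' r + F r = 0 := by
    refine hU.ae_eq_zero_of_integral_contDiff_smul_eq_zero
      ((hA'.add hF).locallyIntegrableOn hU.measurableSet) fun ζ hζ hζc hζU => ?_
    have hζ₁ : IsTestFunOn 1 U ζ := ⟨hζ.of_le (by norm_num), hζc, hζU⟩
    calc ∫ r, ζ r • (A' r + F r) = ∫ r, (A' r * ζ r + F r * ζ r) := by
          simp only [smul_eq_mul, mul_comm (ζ _), add_mul]
      _ = 0 := by
          rw [integral_add (hζ₁.integrable_mul hU hA') (hζ₁.integrable_mul hU hF),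
            ← h ζ ⟨hζ, hζc, hζU⟩, hζ₁.integral_mul_deriv_eq_neg hU hA hA', add_neg_cancel]
  have hzero : Set.EqOn (fun r => A' r + F r) (fun _ => 0) U :=
    Measure.eqOn_open_of_ae_eq ((ae_restrict_iff' hU.measurableSet).2 hae) hU (hA'.add hF)
      continuousOn_const
  exact fun r hr => eq_neg_of_add_eq_zero_left (hzero hr)

lemma abs_normed_convolution_le (φ : ContDiffBump (0 : ℝ)) {g : ℝ → ℝ} {C : ℝ}
    (hg : Continuous g) (hC : ∀ x, |g x| ≤ C) (x : ℝ) :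
    |(φ.normed volume ⋆[ContinuousLinearMap.lsmul ℝ ℝ, volume] g) x| ≤ C := by
  simpa [dist_zero_right] using dist_convolution_le (μ := volume) (x₀ := x) (z₀ := (0 : ℝ))
    ((abs_nonneg (g x)).trans (hC x)) φ.support_normed_eq.subset φ.nonneg_normed
    (φ.integral_normed (μ := volume)) hg.aestronglyMeasurable fun y _ => by simpa using hC y

lemma support_normed_convolution_subset (φ : ContDiffBump (0 : ℝ)) (g : ℝ → ℝ) {δ : ℝ}
    (hδ : φ.rOut ≤ δ) :
    Function.support (φ.normed volume ⋆[ContinuousLinearMap.lsmul ℝ ℝ, volume] g) ⊆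
      cthickening δ (tsupport g) := by
  refine (support_convolution_subset _).trans ?_
  rw [φ.support_normed_eq, ball_add_zero]
  exact (thickening_mono hδ _).trans ((thickening_subset_of_subset δ subset_closure).trans
    (thickening_subset_cthickening _ _))

lemma IsTestFunOn.exists_smooth_approx {U : Set ℝ} {ζ : ℝ → ℝ} (hU : IsOpen U)
    (hζ : IsTestFunOn 1 U ζ) :
    ∃ K ⊆ U, IsCompact K ∧ ∃ (C : ℝ) (Z : ℕ → ℝ → ℝ), (∀ j, IsTestFunOn ∞ K (Z j)) ∧
      (∀ j r, |Z j r| ≤ C ∧ |deriv (Z j) r| ≤ C) ∧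
      ∀ r, Tendsto (fun j => Z j r) atTop (𝓝 (ζ r)) ∧
        Tendsto (fun j => deriv (Z j) r) atTop (𝓝 (deriv ζ r)) := by
  obtain ⟨δ, hδ, hδU⟩ :=
    hζ.hasCompactSupport.isCompact.exists_cthickening_subset_open hU hζ.tsupport_subset
  have hK : IsCompact (cthickening δ (tsupport ζ)) := hζ.hasCompactSupport.isCompact.cthickening
  obtain ⟨C, hC⟩ := hζ.continuous.bounded_above_of_compact_support hζ.hasCompactSupport
  obtain ⟨C', hC'⟩ := hζ.deriv.continuous.bounded_above_of_compact_support
    hζ.deriv.hasCompactSupport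
  let φ (j : ℕ) : ContDiffBump (0 : ℝ) :=
    ⟨δ / (j + 1) / 2, δ / (j + 1), by positivity, half_lt_self (by positivity)⟩
  have hφ : Tendsto (fun j => (φ j).rOut) atTop (𝓝 0) := by
    simpa only [mul_one_div, mul_zero] using
      (tendsto_one_div_add_atTop_nhds_zero_nat (𝕜 := ℝ)).const_mul δ
  have hφδ (j : ℕ) : (φ j).rOut ≤ δ := div_le_self hδ.le (by norm_cast; omega)
  let Z (j : ℕ) := (φ j).normed volume ⋆[ContinuousLinearMap.lsmul ℝ ℝ, volume] ζ
  have hsupp (j : ℕ) : Function.support (Z j) ⊆ cthickening δ (tsupport ζ) :=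
    support_normed_convolution_subset (φ j) ζ (hφδ j)
  have hderiv (j : ℕ) : deriv (Z j) =
      (φ j).normed volume ⋆[ContinuousLinearMap.lsmul ℝ ℝ, volume] deriv ζ :=
    funext fun r => (hζ.hasCompactSupport.hasDerivAt_convolution_right _
      (φ j).continuous_normed.locallyIntegrable hζ.contDiff r).deriv
  refine ⟨_, hδU, hK, max C C', Z, fun j => ⟨?_, ?_, ?_⟩, fun j r => ⟨?_, ?_⟩, fun r => ⟨?_, ?_⟩⟩
  · exact (φ j).hasCompactSupport_normed.contDiff_convolution_left _ (φ j).contDiff_normed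
      hζ.continuous.locallyIntegrable
  · exact HasCompactSupport.of_support_subset_isCompact hK (hsupp j)
  · exact closure_minimal (hsupp j) hK.isClosed
  · exact abs_normed_convolution_le (φ j) hζ.continuous
      (fun x => (hC x).trans (le_max_left _ _)) r
  · rw [hderiv]
    exact abs_normed_convolution_le (φ j) hζ.deriv.continuous
      (fun x => (hC' x).trans (le_max_right _ _)) r
  · exact ContDiffBump.convolution_tendsto_right_of_continuous hφ hζ.continuous r
  · simp only [hderiv]
    exact ContDiffBump.convolution_tendsto_right_of_continuous hφ hζ.deriv.continuous r

end TestFunctions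

section SturmLiouville

open scoped ContDiff

/-- Stability of the Sturm–Liouville operator `ζ ↦ -(σ ζ')' - V ζ` on `U`: its quadratic form is
nonnegative on `C_c^∞(U)`. -/
def IsStableSL (U : Set ℝ) (σ V : ℝ → ℝ) : Prop :=
  ∀ ζ : ℝ → ℝ, IsTestFunOn ∞ U ζ → ∫ r, V r * ζ r ^ 2 ≤ ∫ r, σ r * deriv ζ r ^ 2

variable {U : Set ℝ}

lemma tendsto_integral_mul_sq {K : Set ℝ} {F g : ℝ → ℝ} {G : ℕ → ℝ → ℝ} {C : ℝ} (hU : IsOpen U)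
    (hF : ContinuousOn F U) (hK : IsCompact K) (hKU : K ⊆ U) (hG : ∀ j, IsTestFunOn 0 K (G j))
    (hC : ∀ j r, |G j r| ≤ C) (hlim : ∀ r, Tendsto (fun j => G j r) atTop (𝓝 (g r))) :
    Tendsto (fun j => ∫ r, F r * G j r ^ 2) atTop (𝓝 (∫ r, F r * g r ^ 2)) := by
  refine tendsto_integral_of_dominated_convergence (K.indicator fun r => |F r| * C ^ 2)
    (fun j => ((hG j).sq.mono le_rfl hKU).integrable_mul hU hF |>.aestronglyMeasurable)
    (IntegrableOn.integrable_indicator ?_ hK.measurableSet) (fun j => ae_of_all _ fun r => ?_)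
    (ae_of_all _ fun r => ((hlim r).pow 2).const_mul (F r))
  · exact ((hF.mono hKU).abs.mul continuousOn_const).integrableOn_compact hK
  · by_cases hr : r ∈ K
    · rw [Set.indicator_of_mem hr, norm_mul, norm_pow]
      exact mul_le_mul_of_nonneg_left (pow_le_pow_left₀ (norm_nonneg _) (hC j r) 2) (abs_nonneg _)
    · simp [(hG j).eq_zero_of_notMem hr, hr]

namespace IsStableSL

variable {σ V : ℝ → ℝ}

lemma integral_mul_sq_le (hU : IsOpen U) (hσ : ContinuousOn σ U) (hV : ContinuousOn V U)
    (hst : IsStableSL U σ V) {ζ : ℝ → ℝ} (hζ : IsTestFunOn 1 U ζ) :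
    ∫ r, V r * ζ r ^ 2 ≤ ∫ r, σ r * deriv ζ r ^ 2 := by
  obtain ⟨K, hKU, hK, C, Z, hZ, hC, hlim⟩ := hζ.exists_smooth_approx hU
  exact le_of_tendsto_of_tendsto'
    (tendsto_integral_mul_sq hU hV hK hKU (fun j => (hZ j).mono zero_le subset_rfl)
      (fun j r => (hC j r).1) fun r => (hlim r).1)
    (tendsto_integral_mul_sq hU hσ hK hKU (fun j => ((hZ j).mono (by norm_num) subset_rfl).deriv)
      (fun j r => (hC j r).2) fun r => (hlim r).2)
    fun j => hst (Z j) ((hZ j).mono le_rfl hKU)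

-- The test function `p η` in the stability inequality: `σ ((p η)')²` differs from `σ p² (η')²` by
-- `(σ p') (p η²)'`, which is integrated by parts.
theorem integral_jacobi_le (hU : IsOpen U) (hσ : ContinuousOn σ U) (hV : ContinuousOn V U)
    (hst : IsStableSL U σ V) {p k η : ℝ → ℝ} (hp : ContDiffOn ℝ 1 p U) (hk : ContinuousOn k U)
    (hjac : ∀ r ∈ U, HasDerivAt (fun s => σ s * deriv p s) ((k r - V r) * p r) r)
    (hη : IsTestFunOn 1 U η) :
    ∫ r, k r * p r ^ 2 * η r ^ 2 ≤ ∫ r, σ r * p r ^ 2 * deriv η r ^ 2 := by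
  have hpη : IsTestFunOn 1 U (fun r => p r * η r) := hη.mul_left hU hp
  have hpη₂ : IsTestFunOn 1 U (fun r => p r * η r ^ 2) := hη.sq.mul_left hU hp
  have hexpand : ∀ r, σ r * deriv (fun r => p r * η r) r ^ 2 =
      σ r * p r ^ 2 * deriv η r ^ 2 + σ r * deriv p r * deriv (fun r => p r * η r ^ 2) r := by
    intro r
    by_cases hr : r ∈ U
    · have h₁ := ((hp.differentiableOn one_ne_zero).differentiableAt (hU.mem_nhds hr)).hasDerivAt
      have h₂ := (hη.differentiable r).hasDerivAt
      rw [(h₁.fun_mul h₂).deriv, (h₁.fun_mul (h₂.fun_pow 2)).deriv]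
      ring
    · rw [hpη.deriv.eq_zero_of_notMem hr, hη.deriv.eq_zero_of_notMem hr,
        hpη₂.deriv.eq_zero_of_notMem hr]
      ring
  have hσp : ContinuousOn (fun r => σ r * p r ^ 2) U := hσ.mul (hp.continuousOn.pow 2)
  have hσp' : ContinuousOn (fun r => σ r * deriv p r) U :=
    hσ.mul (hp.continuousOn_deriv_of_isOpen hU le_rfl)
  have hjac' : ContinuousOn (fun r => (k r - V r) * p r) U := (hk.sub hV).mul hp.continuousOn
  calc ∫ r, k r * p r ^ 2 * η r ^ 2
      = (∫ r, V r * (p r * η r) ^ 2) + ∫ r, (k r - V r) * p r * (p r * η r ^ 2) := by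
        rw [← integral_add (hpη.sq.integrable_mul hU hV) (hpη₂.integrable_mul hU hjac')]
        congr! 2; ring
    _ ≤ (∫ r, σ r * deriv (fun r => p r * η r) r ^ 2) +
          ∫ r, (k r - V r) * p r * (p r * η r ^ 2) := by
        exact add_le_add (hst.integral_mul_sq_le hU hσ hV hpη) le_rfl
    _ = ∫ r, σ r * p r ^ 2 * deriv η r ^ 2 := by
        simp only [hexpand]
        rw [integral_add (hη.deriv.sq.integrable_mul hU hσp) (hpη₂.deriv.integrable_mul hU hσp'),
          hpη₂.integral_mul_deriv_eq_neg hU hjac hjac', neg_add_cancel_right]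

end IsStableSL

end SturmLiouville

section ExponentialCutoff

open scoped ContDiff

/-- The cutoff function `θ(ε t)` damped by the exponential weight `e^{-α t}`. -/
def expCutoff (θ : ℝ → ℝ) (α ε t : ℝ) : ℝ :=
  θ (ε * t) * exp (-α * t)

lemma isTestFunOn_expCutoff {k : WithTop ℕ∞} {θ : ℝ → ℝ} (hθ : IsTestFunOn k Set.univ θ) (α : ℝ)
    {ε : ℝ} (hε : ε ≠ 0) : IsTestFunOn k Set.univ (expCutoff θ α ε) where
  contDiff := (hθ.contDiff.comp (contDiff_const.mul contDiff_id)).mul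
    (contDiff_const.mul contDiff_id).exp
  hasCompactSupport :=
    (hθ.hasCompactSupport.comp_homeomorph (Homeomorph.mulLeft₀ ε hε)).mul_right
  tsupport_subset := Set.subset_univ _

lemma expCutoff_sq (θ : ℝ → ℝ) (α ε t : ℝ) :
    expCutoff θ α ε t ^ 2 = θ (ε * t) ^ 2 * exp (-2 * α * t) := by
  rw [expCutoff, mul_pow, ← exp_nat_mul]
  ring_nf

lemma deriv_expCutoff_sq {θ : ℝ → ℝ} (hθ : Differentiable ℝ θ) (α ε t : ℝ) :
    deriv (expCutoff θ α ε) t ^ 2 =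
      (ε * deriv θ (ε * t) - α * θ (ε * t)) ^ 2 * exp (-2 * α * t) := by
  have hθε : HasDerivAt (fun t => θ (ε * t)) (deriv θ (ε * t) * ε) t :=
    (hθ (ε * t)).hasDerivAt.comp t (hasDerivAt_const_mul ε)
  have hexp : HasDerivAt (fun t => exp (-α * t)) (exp (-α * t) * -α) t :=
    (hasDerivAt_const_mul (-α)).exp
  have hderiv : deriv (expCutoff θ α ε) t =
      (ε * deriv θ (ε * t) - α * θ (ε * t)) * exp (-α * t) := by
    rw [show expCutoff θ α ε = fun t => θ (ε * t) * exp (-α * t) from rfl,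
      (hθε.fun_mul hexp).deriv]
    ring
  rw [hderiv, mul_pow, ← exp_nat_mul]
  ring_nf

variable {X : Type*} [MeasurableSpace X] {μ : Measure X} {s : X → ℝ}

lemma tendsto_integral_comp_sq_mul {ι : Type*} {l : Filter ι} [l.IsCountablyGenerated]
    {ρ : X → ℝ} {G : ι → ℝ → ℝ} {C a : ℝ} (hs : AEMeasurable s μ) (hρ : Integrable ρ μ)
    (hG : ∀ i, Continuous (G i)) (hC : ∀ᶠ i in l, ∀ t, |G i t| ≤ C)
    (hlim : ∀ t, Tendsto (fun i => G i t) l (𝓝 a)) :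
    Tendsto (fun i => ∫ x, G i (s x) ^ 2 * ρ x ∂μ) l (𝓝 (a ^ 2 * ∫ x, ρ x ∂μ)) := by
  rw [← integral_const_mul]
  refine tendsto_integral_filter_of_dominated_convergence (fun x => C ^ 2 * |ρ x|)
    (.of_forall fun i => ?_) ?_ (hρ.abs.const_mul _)
    (ae_of_all _ fun x => ((hlim (s x)).pow 2).mul_const (ρ x))
  · exact (((hG i).measurable.comp_aemeasurable hs).pow_const 2).aestronglyMeasurable.mul
      hρ.aestronglyMeasurable
  · filter_upwards [hC] with i hi
    refine ae_of_all _ fun x => ?_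
    rw [norm_mul, norm_pow]
    exact mul_le_mul_of_nonneg_right (pow_le_pow_left₀ (norm_nonneg _) (hi (s x)) 2)
      (abs_nonneg _)

variable {w : X → ℝ} {θ : ℝ → ℝ} {α : ℝ}

lemma tendsto_integral_expCutoff_sq (hs : AEMeasurable s μ)
    (hint : Integrable (fun x => exp (-2 * α * s x) * w x) μ) (hθ : IsTestFunOn 0 Set.univ θ) :
    Tendsto (fun ε => ∫ x, expCutoff θ α ε (s x) ^ 2 * w x ∂μ) (𝓝[>] 0)
      (𝓝 (θ 0 ^ 2 * ∫ x, exp (-2 * α * s x) * w x ∂μ)) := by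
  obtain ⟨C, hC⟩ := hθ.continuous.bounded_above_of_compact_support hθ.hasCompactSupport
  simp only [expCutoff_sq, mul_assoc _ (exp _) (w _)]
  refine tendsto_integral_comp_sq_mul hs hint (G := fun ε t => θ (ε * t)) (C := C)
    (fun ε => hθ.continuous.comp (continuous_const_mul ε)) (.of_forall fun ε t => hC _) fun t => ?_
  refine tendsto_nhdsWithin_of_tendsto_nhds (Continuous.tendsto' ?_ _ _ (by simp))
  exact hθ.continuous.comp (continuous_mul_const t)

lemma tendsto_integral_deriv_expCutoff_sq (hs : AEMeasurable s μ)
    (hint : Integrable (fun x => exp (-2 * α * s x) * w x) μ) (hθ : IsTestFunOn 1 Set.univ θ) :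
    Tendsto (fun ε => ∫ x, deriv (expCutoff θ α ε) (s x) ^ 2 * w x ∂μ) (𝓝[>] 0)
      (𝓝 ((α * θ 0) ^ 2 * ∫ x, exp (-2 * α * s x) * w x ∂μ)) := by
  obtain ⟨C, hC⟩ := hθ.continuous.bounded_above_of_compact_support hθ.hasCompactSupport
  obtain ⟨M, hM⟩ := hθ.deriv.continuous.bounded_above_of_compact_support
    hθ.deriv.hasCompactSupport
  have hθc := hθ.continuous
  have hθc' := hθ.deriv.continuous
  simp only [deriv_expCutoff_sq hθ.differentiable, mul_assoc _ (exp _) (w _)]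
  rw [← neg_sq]
  refine tendsto_integral_comp_sq_mul hs hint
    (G := fun ε t => ε * deriv θ (ε * t) - α * θ (ε * t)) (C := M + |α| * C)
    (fun ε => by fun_prop) ?_ fun t => ?_
  · filter_upwards [Ioo_mem_nhdsGT one_pos] with ε hε t
    calc |ε * deriv θ (ε * t) - α * θ (ε * t)|
        ≤ |ε| * |deriv θ (ε * t)| + |α| * |θ (ε * t)| := by
          simpa only [abs_mul] using abs_sub (ε * deriv θ (ε * t)) (α * θ (ε * t))
      _ ≤ 1 * M + |α| * C := by
          gcongr
          · exact abs_le.2 ⟨by linarith [hε.1], hε.2.le⟩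
          · exact hM _
          · exact hC _
      _ = M + |α| * C := by rw [one_mul]
  · exact tendsto_nhdsWithin_of_tendsto_nhds (Continuous.tendsto' (by fun_prop) _ _ (by simp))

theorem ae_eq_zero_of_cutoff_inequality {c : ℝ} (hs : AEMeasurable s μ)
    (hw : 0 ≤ᵐ[μ] w) (hint : Integrable (fun x => exp (-2 * α * s x) * w x) μ) (hαc : α ^ 2 < c)
    (hχ : ∀ χ : ℝ → ℝ, IsTestFunOn ∞ Set.univ χ →
      c * ∫ x, χ (s x) ^ 2 * w x ∂μ ≤ ∫ x, deriv χ (s x) ^ 2 * w x ∂μ) :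
    w =ᵐ[μ] 0 := by
  let θ : ContDiffBump (0 : ℝ) := ⟨1, 2, one_pos, one_lt_two⟩
  have hθ : IsTestFunOn ∞ Set.univ θ := ⟨θ.contDiff, θ.hasCompactSupport, Set.subset_univ _⟩
  have hθ₀ : θ 0 = 1 := θ.one_of_mem_closedBall (mem_closedBall_self zero_le_one)
  have hlim := tendsto_integral_expCutoff_sq hs hint (hθ.mono zero_le subset_rfl)
  have hlim' := tendsto_integral_deriv_expCutoff_sq hs hint (hθ.mono (by norm_num) subset_rfl)
  have hle := le_of_tendsto_of_tendsto (hlim.const_mul c) hlim' <| by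
    filter_upwards [self_mem_nhdsWithin] with ε hε
    exact hχ _ (isTestFunOn_expCutoff hθ α (Set.mem_Ioi.1 hε).ne')
  rw [hθ₀, one_pow, one_mul, mul_one] at hle
  have hnonneg : 0 ≤ᵐ[μ] fun x => exp (-2 * α * s x) * w x := by
    filter_upwards [hw] with x hx using mul_nonneg (exp_pos _).le hx
  have hzero : ∫ x, exp (-2 * α * s x) * w x ∂μ = 0 := by
    nlinarith [integral_nonneg_of_ae hnonneg]
  filter_upwards [(integral_eq_zero_iff_of_nonneg_ae hnonneg hint).1 hzero] with x hx
  exact (mul_eq_zero.1 hx).resolve_left (exp_pos _).ne'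

end ExponentialCutoff

section LogarithmicCutoff

open scoped ContDiff

/-- The function `r ↦ χ (log r)` on the half-line, extended by zero to `r ≤ 0`, where `Real.log`
takes junk values. -/
def logCutoff (χ : ℝ → ℝ) : ℝ → ℝ :=
  (Set.Ioi 0).indicator fun r => χ (log r)

lemma logCutoff_of_pos (χ : ℝ → ℝ) {r : ℝ} (hr : 0 < r) : logCutoff χ r = χ (log r) :=
  Set.indicator_of_mem hr _

lemma logCutoff_eventuallyEq (χ : ℝ → ℝ) {r : ℝ} (hr : 0 < r) :
    logCutoff χ =ᶠ[𝓝 r] fun s => χ (log s) := by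
  filter_upwards [lt_mem_nhds hr] with s hs using logCutoff_of_pos χ hs

lemma deriv_logCutoff {χ : ℝ → ℝ} (hχ : Differentiable ℝ χ) {r : ℝ} (hr : 0 < r) :
    deriv (logCutoff χ) r = deriv χ (log r) / r := by
  rw [(logCutoff_eventuallyEq χ hr).deriv_eq, div_eq_mul_inv]
  exact ((hχ (log r)).hasDerivAt.comp r (hasDerivAt_log hr.ne')).deriv

lemma support_logCutoff_subset (χ : ℝ → ℝ) :
    Function.support (logCutoff χ) ⊆ exp '' tsupport χ := by
  intro r hr
  have hr₀ : 0 < r := Set.mem_of_indicator_ne_zero hr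
  rw [Function.mem_support, logCutoff_of_pos χ hr₀] at hr
  exact ⟨log r, subset_tsupport χ hr, exp_log hr₀⟩

lemma isTestFunOn_logCutoff {k : WithTop ℕ∞} {χ : ℝ → ℝ} (hχ : IsTestFunOn k Set.univ χ) :
    IsTestFunOn k (Set.Ioi 0) (logCutoff χ) := by
  have hK : IsCompact (exp '' tsupport χ) := hχ.hasCompactSupport.isCompact.image continuous_exp
  have hsub : tsupport (logCutoff χ) ⊆ exp '' tsupport χ :=
    closure_minimal (support_logCutoff_subset χ) hK.isClosed
  have hpos : tsupport (logCutoff χ) ⊆ Set.Ioi 0 := by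
    rintro _ hr
    obtain ⟨t, -, rfl⟩ := hsub hr
    exact exp_pos t
  refine ⟨contDiff_iff_contDiffAt.2 fun r => ?_, hK.of_isClosed_subset (isClosed_tsupport _) hsub,
    hpos⟩
  by_cases hr : r ∈ tsupport (logCutoff χ)
  · exact (hχ.contDiff.contDiffAt.comp r (contDiffAt_log.2 (hpos hr).ne')).congr_of_eventuallyEq
      (logCutoff_eventuallyEq χ (hpos hr))
  · exact contDiffAt_const.congr_of_eventuallyEq (notMem_tsupport_iff_eventuallyEq.1 hr)

lemma setIntegral_Ioi_mul_of_isTestFunOn {k : WithTop ℕ∞} {F ζ : ℝ → ℝ}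
    (hζ : IsTestFunOn k (Set.Ioi 0) ζ) : ∫ r in Set.Ioi 0, F r * ζ r = ∫ r, F r * ζ r :=
  setIntegral_eq_integral_of_forall_compl_eq_zero fun r hr => by
    rw [hζ.eq_zero_of_notMem hr, mul_zero]

-- For `η = logCutoff χ` one has `η' = χ'(log r) / r`, so with respect to the measure
-- `σ p² r⁻² dr` the Jacobi field inequality becomes one between `χ²` and `χ'²` at `log r`.
theorem IsStableSL.integral_log_cutoff_le {σ V p k χ : ℝ → ℝ} {c : ℝ}
    (hσ : ContinuousOn σ (Set.Ioi 0)) (hV : ContinuousOn V (Set.Ioi 0))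
    (hst : IsStableSL (Set.Ioi 0) σ V) (hp : ContDiffOn ℝ 1 p (Set.Ioi 0))
    (hk : ContinuousOn k (Set.Ioi 0))
    (hjac : ∀ r > 0, HasDerivAt (fun s => σ s * deriv p s) ((k r - V r) * p r) r)
    (hkσ : ∀ r > 0, c * (σ r / r ^ 2) ≤ k r) (hχ : IsTestFunOn 1 Set.univ χ) :
    c * ∫ r in Set.Ioi 0, χ (log r) ^ 2 * (σ r * p r ^ 2 / r ^ 2) ≤
      ∫ r in Set.Ioi 0, deriv χ (log r) ^ 2 * (σ r * p r ^ 2 / r ^ 2) := by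
  have hη := isTestFunOn_logCutoff hχ
  have hp₂ : ContinuousOn (fun r => p r ^ 2) (Set.Ioi 0) := hp.continuousOn.pow 2
  have hw : ContinuousOn (fun r => c * (σ r * p r ^ 2 / r ^ 2)) (Set.Ioi 0) :=
    continuousOn_const.mul ((hσ.mul hp₂).div (by fun_prop) fun r hr => (pow_pos hr 2).ne')
  calc c * ∫ r in Set.Ioi 0, χ (log r) ^ 2 * (σ r * p r ^ 2 / r ^ 2)
      = ∫ r in Set.Ioi 0, c * (σ r * p r ^ 2 / r ^ 2) * logCutoff χ r ^ 2 := by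
        rw [← integral_const_mul]
        refine setIntegral_congr_fun measurableSet_Ioi fun r hr => ?_
        simp only [logCutoff_of_pos χ hr]
        ring
    _ ≤ ∫ r in Set.Ioi 0, k r * p r ^ 2 * logCutoff χ r ^ 2 := by
        refine setIntegral_mono_on (hη.sq.integrable_mul isOpen_Ioi hw).integrableOn
          (hη.sq.integrable_mul isOpen_Ioi (hk.mul hp₂)).integrableOn measurableSet_Ioi
          fun r hr => mul_le_mul_of_nonneg_right ?_ (sq_nonneg _)
        calc c * (σ r * p r ^ 2 / r ^ 2) = c * (σ r / r ^ 2) * p r ^ 2 := by ring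
          _ ≤ k r * p r ^ 2 := mul_le_mul_of_nonneg_right (hkσ r hr) (sq_nonneg _)
    _ = ∫ r, k r * p r ^ 2 * logCutoff χ r ^ 2 := setIntegral_Ioi_mul_of_isTestFunOn hη.sq
    _ ≤ ∫ r, σ r * p r ^ 2 * deriv (logCutoff χ) r ^ 2 :=
        hst.integral_jacobi_le isOpen_Ioi hσ hV hp hk hjac hη
    _ = ∫ r in Set.Ioi 0, σ r * p r ^ 2 * deriv (logCutoff χ) r ^ 2 :=
        (setIntegral_Ioi_mul_of_isTestFunOn hη.deriv.sq).symm
    _ = ∫ r in Set.Ioi 0, deriv χ (log r) ^ 2 * (σ r * p r ^ 2 / r ^ 2) := by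
        refine setIntegral_congr_fun measurableSet_Ioi fun r hr => ?_
        simp only [deriv_logCutoff hχ.differentiable hr]
        ring

theorem IsStableSL.jacobi_field_eq_zero {σ V p k : ℝ → ℝ} {α c : ℝ}
    (hσ : ContinuousOn σ (Set.Ioi 0)) (hV : ContinuousOn V (Set.Ioi 0))
    (hst : IsStableSL (Set.Ioi 0) σ V) (hp : ContDiffOn ℝ 1 p (Set.Ioi 0))
    (hk : ContinuousOn k (Set.Ioi 0))
    (hjac : ∀ r > 0, HasDerivAt (fun s => σ s * deriv p s) ((k r - V r) * p r) r)
    (hkσ : ∀ r > 0, c * (σ r / r ^ 2) ≤ k r) (hσ₀ : ∀ r > 0, 0 < σ r) (hαc : α ^ 2 < c)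
    (hint : IntegrableOn (fun r => r ^ (-2 * α) * (σ r * p r ^ 2 / r ^ 2)) (Set.Ioi 0)) :
    ∀ r > 0, p r = 0 := by
  have hexp : Set.EqOn (fun r : ℝ => r ^ (-2 * α) * (σ r * p r ^ 2 / r ^ 2))
      (fun r => exp (-2 * α * log r) * (σ r * p r ^ 2 / r ^ 2)) (Set.Ioi 0) := fun r hr => by
    simp only [rpow_def_of_pos hr, mul_comm (log r)]
  have hae : (fun r => σ r * p r ^ 2 / r ^ 2) =ᵐ[volume.restrict (Set.Ioi 0)] 0 := by
    refine ae_eq_zero_of_cutoff_inequality measurable_log.aemeasurable ?_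
      (hint.congr_fun hexp measurableSet_Ioi) hαc fun χ hχ =>
        hst.integral_log_cutoff_le hσ hV hp hk hjac hkσ (hχ.mono (by norm_num) subset_rfl)
    filter_upwards [self_mem_ae_restrict measurableSet_Ioi] with r hr
    exact div_nonneg (mul_nonneg (hσ₀ r hr).le (sq_nonneg _)) (sq_nonneg _)
  have hzero := Measure.eqOn_open_of_ae_eq hae isOpen_Ioi
    ((hσ.mul (hp.continuousOn.pow 2)).div (by fun_prop) fun r hr => (pow_pos hr 2).ne')
    continuousOn_const
  intro r hr
  simpa [hr.ne', (hσ₀ r hr).ne'] using hzero hr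

end LogarithmicCutoff

section MeanCurvatureFlux

/-- The scalar mean curvature flux `s ↦ s / √(1 + s²)`. -/
def flux (s : ℝ) : ℝ :=
  s / √(1 + s ^ 2)

/-- The derivative `s ↦ (1 + s²)^(-3/2)` of `flux`, with the power written through the square
root. -/
def fluxDeriv (s : ℝ) : ℝ :=
  1 / ((1 + s ^ 2) * √(1 + s ^ 2))

lemma hasDerivAt_flux (s : ℝ) : HasDerivAt flux (fluxDeriv s) s := by
  have hpos : 0 < 1 + s ^ 2 := by positivity
  have hsqrt : HasDerivAt (fun t => √(1 + t ^ 2)) (2 * s / (2 * √(1 + s ^ 2))) s := by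
    simpa using ((hasDerivAt_pow 2 s).const_add 1).sqrt hpos.ne'
  refine ((hasDerivAt_id s).div hsqrt (sqrt_pos.2 hpos).ne').congr_deriv ?_
  have hsq := sq_sqrt hpos.le
  rw [fluxDeriv, hsq, id]
  field_simp
  rw [hsq]
  ring

lemma continuous_flux : Continuous flux :=
  continuous_iff_continuousAt.2 fun s => (hasDerivAt_flux s).continuousAt

lemma continuous_fluxDeriv : Continuous fluxDeriv :=
  continuous_const.div (by fun_prop) fun s => by positivity

lemma fluxDeriv_pos (s : ℝ) : 0 < fluxDeriv s := by
  unfold fluxDeriv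
  positivity

lemma one_le_sqrt_one_add_sq (s : ℝ) : 1 ≤ √(1 + s ^ 2) :=
  one_le_sqrt.2 (le_add_of_nonneg_right (sq_nonneg s))

lemma fluxDeriv_le_inv_sqrt (s : ℝ) : fluxDeriv s ≤ 1 / √(1 + s ^ 2) :=
  one_div_le_one_div_of_le (by positivity)
    (le_mul_of_one_le_left (sqrt_nonneg _) (le_add_of_nonneg_right (sq_nonneg s)))

lemma fluxDeriv_le_inv (s : ℝ) : fluxDeriv s ≤ 1 / (1 + s ^ 2) :=
  one_div_le_one_div_of_le (by positivity)
    (le_mul_of_one_le_right (by positivity) (one_le_sqrt_one_add_sq s))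

lemma sq_mul_fluxDeriv_le_one (s : ℝ) : s ^ 2 * fluxDeriv s ≤ 1 :=
  calc s ^ 2 * fluxDeriv s ≤ s ^ 2 * (1 / (1 + s ^ 2)) := by
        gcongr
        exact fluxDeriv_le_inv s
    _ ≤ 1 := by
        rw [mul_one_div, div_le_one (by positivity)]
        linarith

lemma sq_mul_fluxDeriv_le_sq (s : ℝ) : s ^ 2 * fluxDeriv s ≤ s ^ 2 :=
  mul_le_of_le_one_right (sq_nonneg s) <|
    (fluxDeriv_le_inv s).trans (div_le_one_of_le₀ (by linarith [sq_nonneg s]) (by positivity))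

lemma integrableOn_rpow_mul_sq_mul_fluxDeriv {p : ℝ → ℝ} {a : ℝ}
    (hp : ContinuousOn p (Set.Ioi 0)) (hp₀ : p =O[𝓝[>] 0] id) (ha : -3 < a) (ha' : a < -1) :
    IntegrableOn (fun r => r ^ a * (p r ^ 2 * fluxDeriv (p r))) (Set.Ioi 0) := by
  have hcont : ContinuousOn (fun r => p r ^ 2 * fluxDeriv (p r)) (Set.Ioi 0) :=
    (hp.pow 2).mul (continuous_fluxDeriv.comp_continuousOn hp)
  have hnorm (s : ℝ) : ‖s ^ 2 * fluxDeriv s‖ = s ^ 2 * fluxDeriv s :=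
    norm_of_nonneg (mul_nonneg (sq_nonneg s) (fluxDeriv_pos s).le)
  have htop : (fun r => p r ^ 2 * fluxDeriv (p r)) =O[atTop] (fun r : ℝ => r ^ (-0 : ℝ)) :=
    IsBigO.of_bound 1 <| .of_forall fun r => by
      simpa [hnorm] using sq_mul_fluxDeriv_le_one (p r)
  have hbot : (fun r => p r ^ 2 * fluxDeriv (p r)) =O[𝓝[>] 0] (fun r : ℝ => r ^ (-(-2) : ℝ)) := by
    have hle : (fun r => p r ^ 2 * fluxDeriv (p r)) =O[𝓝[>] 0] (fun r => p r ^ 2) :=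
      IsBigO.of_bound 1 <| .of_forall fun r => by
        simpa [hnorm] using sq_mul_fluxDeriv_le_sq (p r)
    simpa using hle.trans (hp₀.pow 2)
  simpa using mellin_convergent_of_isBigO_scalar (s := a + 1)
    (hcont.locallyIntegrableOn measurableSet_Ioi) htop (by linarith) hbot (by linarith)

end MeanCurvatureFlux

section RadialEquation

open scoped ContDiff

variable {d : ℕ} {p F : ℝ → ℝ}

lemma hasDerivAt_pow_mul_flux_of_weak (hp : ContDiffOn ℝ 1 p (Set.Ioi 0))
    (hF : ContinuousOn F (Set.Ioi 0))
    (hweak : ∀ ζ : ℝ → ℝ, IsTestFunOn ∞ (Set.Ioi 0) ζ →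
      ∫ r, r ^ d * flux (p r) * deriv ζ r = ∫ r, r ^ d * F r * ζ r) :
    ∀ r > 0, HasDerivAt (fun s => s ^ d * flux (p s)) (-(r ^ d * F r)) r := by
  have hderiv : ∀ r ∈ Set.Ioi (0 : ℝ), HasDerivAt (fun s => s ^ d * flux (p s))
      (d * r ^ (d - 1) * flux (p r) + r ^ d * (fluxDeriv (p r) * deriv p r)) r := fun r hr =>
    (hasDerivAt_pow d r).fun_mul ((hasDerivAt_flux (p r)).comp r
      ((hp.differentiableOn one_ne_zero).differentiableAt (isOpen_Ioi.mem_nhds hr)).hasDerivAt)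
  have hp' := hp.continuousOn_deriv_of_isOpen isOpen_Ioi le_rfl
  have heq := eqOn_neg_of_integral_mul_deriv_eq isOpen_Ioi hderiv
    ((ContinuousOn.mul (by fun_prop) (continuous_flux.comp_continuousOn hp.continuousOn)).add
      ((continuousOn_pow d).mul
        ((continuous_fluxDeriv.comp_continuousOn hp.continuousOn).mul hp')))
    ((continuousOn_pow d).mul hF) hweak
  exact fun r hr => (hderiv r hr).congr_deriv (heq hr)

lemma hasDerivAt_pow_inv_mul (d : ℕ) {r : ℝ} (hr : r ≠ 0) :
    HasDerivAt (fun s : ℝ => s ^ d) (d * r⁻¹ * r ^ d) r := by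
  refine (hasDerivAt_pow d r).congr_deriv ?_
  rcases d with _ | d
  · simp
  · rw [Nat.add_sub_cancel, pow_succ]
    field_simp

lemma hasDerivAt_jacobi_of_hasDerivAt_flux {F' : ℝ → ℝ} (hp : DifferentiableOn ℝ p (Set.Ioi 0))
    (hF : ∀ r > 0, HasDerivAt F (F' r * p r) r)
    (hode : ∀ r > 0, HasDerivAt (fun s => s ^ d * flux (p s)) (-(r ^ d * F r)) r) :
    ∀ r > 0, HasDerivAt (fun s => s ^ d * fluxDeriv (p s) * deriv p s)
      ((d * (r ^ d / r ^ 2 / √(1 + p r ^ 2)) - r ^ d * F' r) * p r) r := by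
  have hexpand : ∀ r > 0, r ^ d * fluxDeriv (p r) * deriv p r =
      -(r ^ d * F r) - d * r⁻¹ * (r ^ d * flux (p r)) := by
    intro r hr
    have hprod : HasDerivAt (fun s => s ^ d * flux (p s))
        (d * r⁻¹ * r ^ d * flux (p r) + r ^ d * (fluxDeriv (p r) * deriv p r)) r :=
      (hasDerivAt_pow_inv_mul d hr.ne').fun_mul ((hasDerivAt_flux (p r)).comp r
        (hp.differentiableAt (isOpen_Ioi.mem_nhds hr)).hasDerivAt)
    linarith [(hode r hr).unique hprod]
  intro r hr
  have hrhs := ((hasDerivAt_pow_inv_mul d hr.ne').fun_mul (hF r hr)).fun_neg.fun_sub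
    (((hasDerivAt_inv hr.ne').const_mul (d : ℝ)).fun_mul (hode r hr))
  refine (hrhs.congr_of_eventuallyEq ?_).congr_deriv ?_
  · filter_upwards [lt_mem_nhds hr] with s hs using hexpand s hs
  · rw [flux]
    ring

end RadialEquation

section LiouvilleInOneVariable

open scoped ContDiff

-- The interval of admissible exponents `((d - 1) / 2, √d)` is empty for `d ≥ 6`.
lemma exists_sq_lt_and_half_lt {d : ℕ} (hd : 1 ≤ d) (hd' : d ≤ 5) :
    ∃ α : ℝ, α ^ 2 < d ∧ (d - 1) / 2 < α ∧ α < (d + 1) / 2 := by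
  refine ⟨(d - 1) / 2 + 1 / 10, ?_, by linarith, by linarith⟩
  interval_cases d <;> norm_num

theorem eq_zero_of_isStableSL_of_flux_equation {d : ℕ} (hd : 1 ≤ d) (hd' : d ≤ 5) {p F F' : ℝ → ℝ}
    (hp : ContDiffOn ℝ 1 p (Set.Ioi 0)) (hp₀ : p =O[𝓝[>] 0] id)
    (hF : ∀ r > 0, HasDerivAt F (F' r * p r) r) (hF' : ContinuousOn F' (Set.Ioi 0))
    (hode : ∀ r > 0, HasDerivAt (fun s => s ^ d * flux (p s)) (-(r ^ d * F r)) r)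
    (hst : IsStableSL (Set.Ioi 0) (fun r => r ^ d * fluxDeriv (p r)) fun r => r ^ d * F' r) :
    ∀ r > 0, p r = 0 := by
  obtain ⟨α, hαd, hα, hα'⟩ := exists_sq_lt_and_half_lt hd hd'
  have hpow : ContinuousOn (fun r : ℝ => r ^ d) (Set.Ioi 0) := continuousOn_pow d
  have hk : ContinuousOn (fun r => d * (r ^ d / r ^ 2 / √(1 + p r ^ 2))) (Set.Ioi 0) :=
    continuousOn_const.mul ((hpow.div (continuousOn_pow 2) fun r hr => (pow_pos hr 2).ne').div
      ((hp.continuousOn.pow 2).const_add 1).sqrt fun r _ => by positivity)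
  have hσ : ContinuousOn (fun r => r ^ d * fluxDeriv (p r)) (Set.Ioi 0) :=
    hpow.mul (continuous_fluxDeriv.comp_continuousOn hp.continuousOn)
  have hV : ContinuousOn (fun r => r ^ d * F' r) (Set.Ioi 0) := hpow.mul hF'
  have hle : ∀ r > 0, d * (r ^ d * fluxDeriv (p r) / r ^ 2) ≤
      d * (r ^ d / r ^ 2 / √(1 + p r ^ 2)) := by
    intro r hr
    calc d * (r ^ d * fluxDeriv (p r) / r ^ 2)
        = d * (r ^ d / r ^ 2 * fluxDeriv (p r)) := by ring
      _ ≤ d * (r ^ d / r ^ 2 * (1 / √(1 + p r ^ 2))) := by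
          gcongr
          exact fluxDeriv_le_inv_sqrt (p r)
      _ = d * (r ^ d / r ^ 2 / √(1 + p r ^ 2)) := by rw [mul_one_div]
  refine hst.jacobi_field_eq_zero hσ hV hp hk
    (hasDerivAt_jacobi_of_hasDerivAt_flux (hp.differentiableOn one_ne_zero) hF hode) hle
    (fun r hr => mul_pos (pow_pos hr d) (fluxDeriv_pos _)) hαd ?_
  refine (integrableOn_rpow_mul_sq_mul_fluxDeriv hp.continuousOn hp₀ (a := -2 * α + d - 2)
    (by linarith) (by linarith)).congr_fun (fun r hr => ?_) measurableSet_Ioi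
  simp only [rpow_sub hr, rpow_add hr, rpow_natCast, rpow_two]
  ring

end LiouvilleInOneVariable

section RadialFunctions

open scoped ContDiff

variable {E : Type*} [NormedAddCommGroup E] [InnerProductSpace ℝ E]

lemma gradient_comp_norm [CompleteSpace E] {k : ℝ → ℝ} {x : E} (hx : x ≠ 0)
    (hk : DifferentiableAt ℝ k ‖x‖) :
    gradient (fun y => k ‖y‖) x = (deriv k ‖x‖ / ‖x‖) • x := by
  have hx' : ‖x‖ ≠ 0 := norm_ne_zero_iff.2 hx
  have hnorm : HasFDerivAt (fun y : E => ‖y‖) (‖x‖⁻¹ • innerSL ℝ x) x := by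
    have hsqrt := (hasStrictFDerivAt_norm_sq x).hasFDerivAt.sqrt (pow_ne_zero 2 hx')
    simp only [sqrt_sq (norm_nonneg _)] at hsqrt
    refine hsqrt.congr_fderiv ?_
    ext y
    simp only [one_div, mul_inv_rev, smul_apply, coe_innerSL_apply, nsmul_eq_mul,
      Nat.cast_ofNat, smul_eq_mul]
    field_simp
  have hgrad : HasGradientAt (fun y => k ‖y‖) ((deriv k ‖x‖ / ‖x‖) • x) x := by
    rw [hasGradientAt_iff_hasFDerivAt]
    refine (hk.hasDerivAt.comp_hasFDerivAt x hnorm).congr_fderiv ?_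
    ext y
    simp [div_eq_mul_inv, mul_assoc]
  exact hgrad.gradient

lemma inner_gradient_comp_norm [CompleteSpace E] {k l : ℝ → ℝ} {x : E} (hx : x ≠ 0)
    (hk : DifferentiableAt ℝ k ‖x‖) (hl : DifferentiableAt ℝ l ‖x‖) :
    ⟪gradient (fun y => k ‖y‖) x, gradient (fun y => l ‖y‖) x⟫ = deriv k ‖x‖ * deriv l ‖x‖ := by
  have hx' : ‖x‖ ≠ 0 := norm_ne_zero_iff.2 hx
  rw [gradient_comp_norm hx hk, gradient_comp_norm hx hl, inner_smul_left, inner_smul_right,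
    real_inner_self_eq_norm_sq, RCLike.conj_to_real]
  field_simp

lemma norm_sq_gradient_comp_norm [CompleteSpace E] {k : ℝ → ℝ} {x : E} (hx : x ≠ 0)
    (hk : DifferentiableAt ℝ k ‖x‖) : ‖gradient (fun y => k ‖y‖) x‖ ^ 2 = deriv k ‖x‖ ^ 2 := by
  rw [← real_inner_self_eq_norm_sq, inner_gradient_comp_norm hx hk hk, sq]

lemma IsTestFunOn.isTestFun_comp_norm {n : ℕ} {ζ : ℝ → ℝ} (hζ : IsTestFunOn ∞ (Set.Ioi 0) ζ) :
    IsTestFun (Set.univ : Set (Euc n)) fun x => ζ ‖x‖ := by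
  refine ⟨contDiff_iff_contDiffAt.2 fun x => ?_, ?_, Set.subset_univ _⟩
  · by_cases hx : x = 0
    · have hζ₀ : ζ =ᶠ[𝓝 ‖x‖] 0 := notMem_tsupport_iff_eventuallyEq.1 fun h =>
        norm_pos_iff.1 (hζ.tsupport_subset h) hx
      exact contDiffAt_const.congr_of_eventuallyEq (continuous_norm.continuousAt.eventually hζ₀)
    · exact hζ.contDiff.contDiffAt.comp x (contDiffAt_norm ℝ hx)
  · obtain ⟨R, hR⟩ := hζ.hasCompactSupport.isCompact.isBounded.subset_closedBall 0
    refine HasCompactSupport.of_support_subset_isCompact (isCompact_closedBall (0 : Euc n) R) ?_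
    intro x hx
    simpa using hR (subset_tsupport ζ hx)

lemma exists_integral_comp_norm_eq (d : ℕ) : ∃ c : ℝ, 0 < c ∧ ∀ F : ℝ → ℝ,
    ∫ x : Euc (d + 1), F ‖x‖ = c * ∫ r in Set.Ioi 0, r ^ d * F r := by
  refine ⟨(d + 1) * (volume : Measure (Euc (d + 1))).real (ball 0 1), ?_, fun F => ?_⟩
  · have hball : 0 < (volume : Measure (Euc (d + 1))).real (ball 0 1) :=
      ENNReal.toReal_pos (measure_ball_pos _ _ one_pos).ne' measure_ball_lt_top.ne
    positivity
  · rw [integral_fun_norm_addHaar volume F]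
    simp [mul_assoc]

end RadialFunctions

section RadialReduction

open scoped ContDiff

variable {d : ℕ} {f h : ℝ → ℝ}

lemma IsWeakSolution.integral_radial (hh : ∀ r > 0, DifferentiableAt ℝ h r)
    (hu : IsWeakSolution (Set.univ : Set (Euc (d + 1))) f fun x => h ‖x‖) {ζ : ℝ → ℝ}
    (hζ : IsTestFunOn ∞ (Set.Ioi 0) ζ) :
    ∫ r, r ^ d * flux (deriv h r) * deriv ζ r = ∫ r, r ^ d * f (h r) * ζ r := by
  have hζ₁ : IsTestFunOn 1 (Set.Ioi 0) ζ := hζ.mono (by norm_num) subset_rfl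
  obtain ⟨c, hc, hpolar⟩ := exists_integral_comp_norm_eq d
  have hball : ∫ x : Euc (d + 1), flux (deriv h ‖x‖) * deriv ζ ‖x‖ =
      ∫ x : Euc (d + 1), f (h ‖x‖) * ζ ‖x‖ := by
    have hweak := hu.2.2.2 _ hζ.isTestFun_comp_norm
    simp only [Measure.restrict_univ] at hweak
    rw [← hweak]
    refine integral_congr_ae ?_
    filter_upwards [Measure.ae_ne volume (0 : Euc (d + 1))] with x hx
    have hx' := hh _ (norm_pos_iff.2 hx)
    rw [inner_gradient_comp_norm hx hx' hζ₁.differentiable.differentiableAt,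
      norm_sq_gradient_comp_norm hx hx', flux]
    ring
  rw [hpolar fun r => flux (deriv h r) * deriv ζ r, hpolar fun r => f (h r) * ζ r] at hball
  have hline := mul_left_cancel₀ hc.ne' hball
  simp only [← mul_assoc] at hline
  rwa [setIntegral_Ioi_mul_of_isTestFunOn hζ₁.deriv, setIntegral_Ioi_mul_of_isTestFunOn hζ]
    at hline

lemma second_variation_integrand_eq (s t : ℝ) :
    t ^ 2 / √(1 + s ^ 2) - (s * t) ^ 2 / (1 + s ^ 2) ^ ((3 : ℝ) / 2) = fluxDeriv s * t ^ 2 := by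
  have hpos : 0 < 1 + s ^ 2 := by positivity
  have hpow : (1 + s ^ 2) ^ ((3 : ℝ) / 2) = (1 + s ^ 2) * √(1 + s ^ 2) := by
    rw [sqrt_eq_rpow, ← rpow_one_add' hpos.le (by norm_num)]
    norm_num
  rw [hpow, fluxDeriv]
  field_simp
  ring

lemma IsStableSolution.isStableSL_radial (hh : ∀ r > 0, DifferentiableAt ℝ h r)
    (hu : IsStableSolution (Set.univ : Set (Euc (d + 1))) f fun x => h ‖x‖) :
    IsStableSL (Set.Ioi 0) (fun r => r ^ d * fluxDeriv (deriv h r))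
      fun r => r ^ d * deriv f (h r) := by
  intro ζ hζ
  have hζ₁ : IsTestFunOn 1 (Set.Ioi 0) ζ := hζ.mono (by norm_num) subset_rfl
  obtain ⟨c, hc, hpolar⟩ := exists_integral_comp_norm_eq d
  have hball : ∫ x : Euc (d + 1), deriv f (h ‖x‖) * ζ ‖x‖ ^ 2 ≤
      ∫ x : Euc (d + 1), fluxDeriv (deriv h ‖x‖) * deriv ζ ‖x‖ ^ 2 := by
    have hstable := hu.2.2 _ hζ.isTestFun_comp_norm
    simp only [Measure.restrict_univ] at hstable
    refine hstable.trans_eq (integral_congr_ae ?_)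
    filter_upwards [Measure.ae_ne volume (0 : Euc (d + 1))] with x hx
    have hx' := hh _ (norm_pos_iff.2 hx)
    have hζx : DifferentiableAt ℝ ζ ‖x‖ := hζ₁.differentiable.differentiableAt
    rw [inner_gradient_comp_norm hx hx' hζx, norm_sq_gradient_comp_norm hx hx',
      norm_sq_gradient_comp_norm hx hζx, second_variation_integrand_eq]
  rw [hpolar fun r => deriv f (h r) * ζ r ^ 2,
    hpolar fun r => fluxDeriv (deriv h r) * deriv ζ r ^ 2] at hball
  have hline := le_of_mul_le_mul_left hball hc
  simp only [← mul_assoc] at hline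
  rwa [setIntegral_Ioi_mul_of_isTestFunOn hζ.sq, setIntegral_Ioi_mul_of_isTestFunOn hζ₁.deriv.sq]
    at hline

end RadialReduction

section RadialProfile

lemma exists_even_profile {E : Type*} [NormedAddCommGroup E] [NormedSpace ℝ E] [Nontrivial E]
    {k : WithTop ℕ∞} {u : E → ℝ} {g : ℝ → ℝ} (hu : ContDiff ℝ k u) (hradial : ∀ x, u x = g ‖x‖) :
    ∃ h : ℝ → ℝ, ContDiff ℝ k h ∧ h.Even ∧ u = fun x => h ‖x‖ := by
  obtain ⟨e, he⟩ := exists_norm_eq E zero_le_one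
  refine ⟨fun r => u (r • e), hu.comp (contDiff_id.smul contDiff_const), fun r => ?_,
    funext fun x => ?_⟩ <;>
  simp [hradial, norm_smul, he]

lemma odd_deriv_of_even {h : ℝ → ℝ} (hh : h.Even) : (deriv h).Odd := fun r => by
  have hneg : (fun s => h (-s)) = h := funext hh
  simpa [hneg] using deriv_comp_neg h (-r)

lemma isBigO_id_of_odd {p : ℝ → ℝ} (hp : DifferentiableAt ℝ p 0) (hodd : p.Odd) :
    p =O[𝓝 0] id :=
  hp.isBigO_sub.congr (by simp [hodd.map_zero]) (by simp)

lemma eq_zero_of_odd_of_forall_pos {p : ℝ → ℝ} (hodd : p.Odd) (hpos : ∀ r > 0, p r = 0) (r : ℝ) :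
    p r = 0 := by
  rcases lt_trichotomy r 0 with hr | rfl | hr
  · rw [← neg_neg r, hodd, hpos _ (neg_pos.2 hr), neg_zero]
  · exact hodd.map_zero
  · exact hpos r hr

end RadialProfile

theorem stmt_7_general (n : ℕ) (hn : 2 ≤ n) (hn' : n ≤ 6) (f : ℝ → ℝ) (u : Euc n → ℝ) (g : ℝ → ℝ)
    (hf : ContDiff ℝ 1 f)
    (hreg : ContDiff ℝ 2 u)
    (hstable : IsStableSolution (Set.univ : Set (Euc n)) f u)
    (hradial : ∀ x : Euc n, u x = g ‖x‖) :
    ∃ c₀ : ℝ, ∀ x : Euc n, u x = c₀ := by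
  obtain ⟨d, rfl⟩ : ∃ d, n = d + 1 := ⟨n - 1, by omega⟩
  obtain ⟨h, hh, heven, rfl⟩ := exists_even_profile hreg hradial
  have hh' : Differentiable ℝ h := hh.differentiable two_ne_zero
  have hp : ContDiff ℝ 1 (deriv h) := hh.deriv'
  have hodd : (deriv h).Odd := odd_deriv_of_even heven
  have hp₀ : deriv h =O[𝓝[>] 0] id :=
    (isBigO_id_of_odd (hp.differentiable one_ne_zero 0) hodd).mono nhdsWithin_le_nhds
  have hode : ∀ r > 0, HasDerivAt (fun s => s ^ d * flux (deriv h s)) (-(r ^ d * f (h r))) r :=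
    hasDerivAt_pow_mul_flux_of_weak hp.contDiffOn (hf.continuous.comp hh.continuous).continuousOn
      fun ζ hζ => hstable.1.integral_radial (fun r _ => hh' r) hζ
  have hzero : ∀ r > 0, deriv h r = 0 :=
    eq_zero_of_isStableSL_of_flux_equation (by omega) (by omega) hp.contDiffOn hp₀
      (fun r _ => ((hf.differentiable one_ne_zero (h r)).hasDerivAt.comp r (hh' r).hasDerivAt))
      ((hf.continuous_deriv le_rfl).comp hh.continuous).continuousOn hode
      (hstable.isStableSL_radial fun r _ => hh' r)
  exact ⟨h 0, fun x => is_const_of_deriv_eq_zero hh'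
    (eq_zero_of_odd_of_forall_pos hodd hzero) ‖x‖ 0⟩

/-- **Theorem (Nonexistence of nonconstant radial stable solutions for `2 ≤ n ≤ 6`).**
Let `2 ≤ n ≤ 6`, `f ∈ C¹(ℝ)` and let `u` be a `W^{3,1}_loc(ℝⁿ)` stable solution of
`div(∇u/√(1+|∇u|²)) = -f(u)` in `ℝⁿ`, radially symmetric with respect to the origin.
Then `u` is constant (no growth assumption at infinity is needed). -/
theorem stmt_7 (n : ℕ) (hn : 2 ≤ n) (hn' : n ≤ 6) (f : ℝ → ℝ) (u : Euc n → ℝ) (g : ℝ → ℝ)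
    (hf : ContDiff ℝ 1 f)
    (hreg : ContDiff ℝ 3 u)
    (hstable : IsStableSolution (Set.univ : Set (Euc n)) f u)
    (hradial : ∀ x : Euc n, u x = g ‖x‖) :
    ∃ c₀ : ℝ, ∀ x : Euc n, u x = c₀ :=
  stmt_7_general n hn hn' f u g hf (hreg.of_le (by norm_num)) hstable hradial
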